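/- arXiv:1902.10373 — 2 statements merged into one kernel-verified Lean document; each statement's English description precedes it below -/
import Mathlib

section
/- For each l ≥ 0, let π_l be a permutation of {1, 2, …, 2^l}. For l ≥ 0 and 1 ≤ j ≤ 2^l, let κ_j^l denote the reduced continued fraction expansion (a finite list of positive integers) of the j-th rational, counted from the left, at level l of the Kepler tree. Let 𝒦^π be the infinite sequence of positive integers obtained by concatenating, for l = 0, 1, 2, … in order, the lists κ_{π_l(1)}^l, κ_{π_l(2)}^l, …, κ_{π_l(2^l)}^l. Then 𝒦^π is Minkowski normal: for every k ≥ 1 and every block d = (d_1, …, d_k) of positive integers, the asymptotic frequency of occurrences of d among the first n digits of 𝒦^π tends to 2^{−(d_1 + ⋯ + d_k)} as n → ∞. -/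
/-- Value of a finite regular continued fraction
`[a₁, a₂, …, aₙ] = 1/(a₁ + 1/(a₂ + ⋯ + 1/aₙ))`. -/
def cfvQ : List ℕ → ℚ
  | [] => 0
  | a :: t => 1 / (a + cfvQ t)

/-- Fuelled continued fraction digit algorithm: for `r ∈ (0,1)` produce the digit `⌊1/r⌋`
and recurse on the fractional part of `1/r`. -/
def cfeAux : ℕ → ℚ → List ℕ
  | 0, _ => []
  | fuel + 1, r =>
    if 0 < r ∧ r < 1 then (⌊r⁻¹⌋).toNat :: cfeAux fuel (Int.fract r⁻¹) else []

/-- The reduced regular continued fraction expansion `[a₁, …, aₙ]` (all `aᵢ ≥ 1`, `aₙ ≥ 2`)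
of a rational `r ∈ (0,1)`; the empty list for `r ∉ (0,1)`.  (Each step of the digit
algorithm strictly decreases the denominator, so `r.den` steps of fuel always suffice.) -/
def cfe (r : ℚ) : List ℕ := cfeAux r.den r

/-- The Kepler tree rule: if a node carries the rational `r = p/q` (in lowest terms), then
its left child carries `r/(r+1) = p/(p+q)` and its right child carries `1/(r+1) = q/(p+q)`.
(`false` = left child, `true` = right child.) -/
def keplerStep (r : ℚ) (b : Bool) : ℚ := if b then 1 / (r + 1) else r / (r + 1)

/-- The rational at the node of the Kepler tree indexed by the binary word `w`:
the root `1/2` is indexed by the empty word, and appending `false` (resp. `true`) moves to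
the left (resp. right) child. -/
def keplerNode (w : List Bool) : ℚ := w.foldl keplerStep (1 / 2)

/-- The top-down, left-to-right enumeration of the Kepler tree: `keplerSeq 1 = 1/2` is the
root, and the children of `keplerSeq n` are `keplerSeq (2n)` (left) and `keplerSeq (2n+1)`
(right).  (`keplerSeq i` is the `i`-th term `k_i`; `keplerSeq 0` is junk.) -/
def keplerSeq (n : ℕ) : ℚ :=
  if n ≤ 1 then 1 / 2
  else keplerStep (keplerSeq (n / 2)) (decide (n % 2 = 1))
  termination_by n
  decreasing_by exact Nat.div_lt_self (by omega) (by norm_num)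

/-- `occCount a d n` = number of occurrences of the block `d` among the first `n` digits of
the sequence `a`: the number of (0-indexed) positions `p` with `p + d.length ≤ n` such that
the digits of `a` starting at position `p` spell out `d`.  (Positions `p = i - 1` for
`1 ≤ i ≤ n - d.length + 1`.) -/
noncomputable def occCount (a : ℕ → ℕ) (d : List ℕ) (n : ℕ) : ℕ :=
  Set.ncard {p : ℕ | p + d.length ≤ n ∧ ∀ j < d.length, a (p + j) = d.getD j 0}

/-- A sequence of positive integer digits is *Minkowski normal* if every nonempty block
`d = (d₁, …, d_k)` of positive integers occurs with asymptotic frequency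
`2^{-(d₁ + ⋯ + d_k)}`. -/
def MinkowskiNormalSeq (a : ℕ → ℕ) : Prop :=
  ∀ d : List ℕ, d ≠ [] → (∀ x ∈ d, 0 < x) →
    Filter.Tendsto (fun n => (occCount a d n : ℝ) / n) Filter.atTop
      (nhds (((2 : ℝ) ^ d.sum)⁻¹))

/-- Given permutations `π l` of the `2^l` positions of level `l`, the concatenation (in
left-to-right order of `j`) of the reduced continued fraction expansions
`κ^l_{π_l(j)} = cfe (keplerSeq (2^l + π l j))` of the rationals of level `l` of the Kepler
tree; `keplerSeq (2^l + j)` is the `(j+1)`-st rational from the left at level `l`. -/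
def permLevel (π : (l : ℕ) → Equiv.Perm (Fin (2 ^ l))) (l : ℕ) : List ℕ :=
  (List.ofFn fun j : Fin (2 ^ l) => cfe (keplerSeq (2 ^ l + (π l j : ℕ)))).flatten

/-- The infinite digit sequence `𝒦^π` obtained by concatenating, for `l = 0, 1, 2, …`, the
within-level permuted expansions `κ^l_{π_l(1)}, κ^l_{π_l(2)}, …, κ^l_{π_l(2^l)}`;
`permDigits π n` is its `(n+1)`-st digit.  (The first `n+1` levels contribute more than `n`
digits, so the `getD` lookup is within range.) -/
def permDigits (π : (l : ℕ) → Equiv.Perm (Fin (2 ^ l))) (n : ℕ) : ℕ :=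
  ((List.range (n + 1)).flatMap (permLevel π)).getD n 0

/-! ### Continued fractions along the Kepler tree -/

/-- Increase the first entry of a list by one. -/
def incHead : List ℕ → List ℕ
  | [] => []
  | a :: t => (a + 1) :: t

/-- The digits of the `n`-th rational of the Kepler tree. -/
def keplerDigits (n : ℕ) : List ℕ :=
  if n ≤ 1 then [2]
  else if n % 2 = 1 then 1 :: keplerDigits (n / 2) else incHead (keplerDigits (n / 2))
  termination_by n
  decreasing_by all_goals exact Nat.div_lt_self (by omega) (by norm_num)

theorem cfeAux_succ_eq (fuel : ℕ) (r : ℚ) (h : r.num ≤ fuel) :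
    cfeAux (fuel + 1) r = cfeAux fuel r := by
  induction fuel generalizing r with
  | zero =>
    have : ¬ 0 < r := by
      rw [← Rat.num_pos]
      push_cast at h
      omega
    simp [cfeAux, this]
  | succ k ih =>
    rw [cfeAux, cfeAux.eq_2 r k]
    split_ifs with hr
    · rw [ih]
      have := Rat.fract_inv_num_lt_num_of_pos hr.1
      push_cast at h
      omega
    · rfl

theorem cfeAux_eq_of_le {m n : ℕ} (r : ℚ) (hm : r.num ≤ m) (hmn : m ≤ n) :
    cfeAux n r = cfeAux m r := by
  induction n, hmn using Nat.le_induction with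
  | base => rfl
  | succ k hk ih =>
    rw [cfeAux_succ_eq _ _ (hm.trans (by exact_mod_cast hk)), ih]

theorem exists_cfeAux_eq_cfe (r : ℚ) (h1 : r < 1) : ∃ N, ∀ n ≥ N, cfeAux n r = cfe r := by
  refine ⟨r.den, fun n hn => cfeAux_eq_of_le r ?_ hn⟩
  exact (Rat.num_lt_denom_iff.2 h1).le

theorem cfe_one_div_add_one {r : ℚ} (h0 : 0 < r) (h1 : r < 1) :
    cfe (1 / (r + 1)) = 1 :: cfe r := by
  have hlt : 1 / (r + 1) < 1 := by rw [div_lt_one (by linarith)]; linarith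
  obtain ⟨N, hN⟩ := exists_cfeAux_eq_cfe r h1
  obtain ⟨N', hN'⟩ := exists_cfeAux_eq_cfe _ hlt
  rw [← hN' (N + N' + 1) (by omega), cfeAux, if_pos ⟨by positivity, hlt⟩]
  have e : (1 / (r + 1))⁻¹ = r + 1 := by simp
  have hf : ⌊r⌋ = 0 := Int.floor_eq_zero_iff.2 ⟨h0.le, h1⟩
  rw [e, Int.floor_add_one, Int.fract_add_one, hf, Int.fract_eq_self.2 ⟨h0.le, h1⟩,
    hN _ (by omega)]
  rfl

theorem cfe_div_add_one {r : ℚ} (h0 : 0 < r) (h1 : r < 1) :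
    cfe (r / (r + 1)) = incHead (cfe r) := by
  have hlt : r / (r + 1) < 1 := by rw [div_lt_one (by linarith)]; linarith
  obtain ⟨N, hN⟩ := exists_cfeAux_eq_cfe r h1
  obtain ⟨N', hN'⟩ := exists_cfeAux_eq_cfe _ hlt
  rw [← hN' (N + N' + 1) (by omega), ← hN (N + N' + 1) (by omega), cfeAux, cfeAux.eq_2 r,
    if_pos ⟨by positivity, hlt⟩, if_pos ⟨h0, h1⟩]
  have e : (r / (r + 1))⁻¹ = r⁻¹ + 1 := by field_simp; ring
  have hf : 0 ≤ ⌊r⁻¹⌋ := Int.floor_nonneg.2 (by positivity)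
  rw [e, Int.floor_add_one, Int.fract_add_one, incHead, Int.toNat_add hf (by norm_num)]
  rfl

theorem cfe_one_half : cfe (1 / 2) = [2] := by
  have : ⌊(2 : ℚ)⌋ = 2 := by exact_mod_cast Int.floor_natCast 2
  obtain ⟨N, hN⟩ := exists_cfeAux_eq_cfe (1 / 2) (by norm_num)
  rw [← hN (N + 2) (by omega)]
  norm_num [cfeAux, this]
  rfl

theorem keplerStep_mem {r : ℚ} (h0 : 0 < r) (b : Bool) :
    0 < keplerStep r b ∧ keplerStep r b < 1 := by
  cases b <;> simp only [keplerStep, if_true, if_false, Bool.false_eq_true] <;>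
    refine ⟨by positivity, ?_⟩ <;> rw [div_lt_one (by linarith)] <;> linarith

theorem keplerSeq_mem (n : ℕ) : 0 < keplerSeq n ∧ keplerSeq n < 1 := by
  induction n using Nat.strong_induction_on with
  | _ n ih =>
    rw [keplerSeq]
    split_ifs with h
    · norm_num
    · exact keplerStep_mem (ih (n / 2) (by omega)).1 _

theorem cfe_keplerSeq (n : ℕ) : cfe (keplerSeq n) = keplerDigits n := by
  induction n using Nat.strong_induction_on with
  | _ n ih =>
    rw [keplerSeq, keplerDigits]
    split_ifs with h h2
    · exact cfe_one_half
    · rw [← ih _ (by omega), ← cfe_one_div_add_one (keplerSeq_mem _).1 (keplerSeq_mem _).2]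
      simp [keplerStep, h2]
    · rw [← ih _ (by omega), ← cfe_div_add_one (keplerSeq_mem _).1 (keplerSeq_mem _).2]
      simp [keplerStep, h2]

theorem length_incHead (w : List ℕ) : (incHead w).length = w.length := by
  cases w <;> rfl

theorem length_keplerDigits_le (l n : ℕ) (h : n < 2 ^ (l + 1)) :
    (keplerDigits n).length ≤ l + 1 := by
  induction l generalizing n with
  | zero =>
    rw [keplerDigits, if_pos (by omega)]
    simp
  | succ l ih =>
    have := ih (n / 2) (by rw [pow_succ] at h; omega)
    rw [keplerDigits]
    split_ifs
    · simp
    · simpa using this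
    · rw [length_incHead]; omega

theorem keplerDigits_two_mul {n : ℕ} (h : 1 ≤ n) :
    keplerDigits (2 * n) = incHead (keplerDigits n) := by
  rw [keplerDigits, if_neg (by omega), if_neg (by omega), Nat.mul_div_cancel_left _ (by norm_num)]

theorem keplerDigits_two_mul_add_one {n : ℕ} (h : 1 ≤ n) :
    keplerDigits (2 * n + 1) = 1 :: keplerDigits n := by
  rw [keplerDigits, if_neg (by omega), if_pos (by omega)]
  congr 2
  omega

/-! ### Sums over levels as iterates of an operator -/

/-- The sum of `g` over the digit lists of the two children of a node. -/
def childSum (g : List ℕ → ℝ) (w : List ℕ) : ℝ := g (incHead w) + g (1 :: w)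

theorem sum_range_two_mul (f : ℕ → ℝ) (n : ℕ) :
    ∑ i ∈ Finset.range (2 * n), f i = ∑ i ∈ Finset.range n, (f (2 * i) + f (2 * i + 1)) := by
  induction n with
  | zero => simp
  | succ n ih => rw [mul_add, Finset.sum_range_succ _ n, ← ih, mul_one, Finset.sum_range_succ,
      Finset.sum_range_succ, add_assoc]

theorem sum_keplerDigits_eq_iterate (g : List ℕ → ℝ) (l : ℕ) :
    ∑ j ∈ Finset.range (2 ^ l), g (keplerDigits (2 ^ l + j)) = childSum^[l] g [2] := by
  induction l generalizing g with
  | zero =>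
    rw [pow_zero, Finset.sum_range_one, keplerDigits]
    simp
  | succ l ih =>
    rw [Function.iterate_succ_apply, ← ih, pow_succ', sum_range_two_mul]
    refine Finset.sum_congr rfl fun j _ => ?_
    have : 1 ≤ 2 ^ l + j := by have := Nat.one_le_two_pow (n := l); omega
    rw [childSum, ← keplerDigits_two_mul this, ← keplerDigits_two_mul_add_one this, mul_add,
      add_assoc]

/-- Nonempty lists with a positive first entry. -/
def PosHead (w : List ℕ) : Prop := ∃ a t, w = (a + 1) :: t

theorem PosHead.incHead {w : List ℕ} (h : PosHead w) : PosHead (incHead w) := by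
  obtain ⟨a, t, rfl⟩ := h
  exact ⟨a + 1, t, rfl⟩

theorem posHead_one_cons (w : List ℕ) : PosHead (1 :: w) := ⟨0, w, rfl⟩

theorem posHead_two : PosHead [2] := ⟨1, [], rfl⟩

theorem iterate_childSum_mono {g g' : List ℕ → ℝ} (h : ∀ w, PosHead w → g w ≤ g' w) (m : ℕ) :
    ∀ w, PosHead w → childSum^[m] g w ≤ childSum^[m] g' w := by
  induction m generalizing g g' with
  | zero => exact h
  | succ m ih =>
    exact ih fun w hw => add_le_add (h _ hw.incHead) (h _ (posHead_one_cons w))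

theorem iterate_childSum_congr {g g' : List ℕ → ℝ} (h : ∀ w, PosHead w → g w = g' w) (m : ℕ)
    (w : List ℕ) (hw : PosHead w) : childSum^[m] g w = childSum^[m] g' w :=
  le_antisymm (iterate_childSum_mono (fun w hw => (h w hw).le) m w hw)
    (iterate_childSum_mono (fun w hw => (h w hw).ge) m w hw)

theorem iterate_childSum_linear (a b : ℝ) (g g' : List ℕ → ℝ) (m : ℕ) (w : List ℕ) :
    childSum^[m] (fun w => a * g w + b * g' w) w =
      a * childSum^[m] g w + b * childSum^[m] g' w := by
  induction m generalizing g g' with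
  | zero => rfl
  | succ m ih =>
    simp only [Function.iterate_succ_apply]
    rw [← ih]
    refine congrArg (fun F => childSum^[m] F w) (funext fun w => ?_)
    simp only [childSum]
    ring

theorem iterate_childSum_const (c : ℝ) (m : ℕ) (w : List ℕ) :
    childSum^[m] (fun _ => c) w = 2 ^ m * c := by
  induction m generalizing c with
  | zero => simp
  | succ m ih =>
    rw [Function.iterate_succ_apply]
    have : childSum (fun _ => c) = fun _ => c + c := rfl
    rw [this, ih]
    ring

theorem iterate_childSum_affine (a c : ℝ) (g : List ℕ → ℝ) (m : ℕ) (w : List ℕ) :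
    childSum^[m] (fun w => a * g w + c) w = a * childSum^[m] g w + 2 ^ m * c := by
  have := iterate_childSum_linear a 1 g (fun _ => c) m w
  rw [iterate_childSum_const] at this
  simpa using this

/-- `g` changes by a bounded amount from a node to its children. -/
def BoundedStep (g : List ℕ → ℝ) : Prop :=
  ∃ D, ∀ w, PosHead w → |g (incHead w) - g w| ≤ D ∧ |g (1 :: w) - g w| ≤ D

theorem BoundedStep.childSum {g : List ℕ → ℝ} (h : BoundedStep g) :
    BoundedStep (childSum g) := by
  obtain ⟨D, hD⟩ := h
  refine ⟨6 * D, fun w hw => ?_⟩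
  have h1 := hD w hw
  have h2 := hD _ hw.incHead
  have h3 := hD _ (posHead_one_cons w)
  simp only [abs_le, _root_.childSum] at *
  refine ⟨⟨?_, ?_⟩, ?_, ?_⟩ <;> linarith

theorem BoundedStep.iterate {g : List ℕ → ℝ} (h : BoundedStep g) (m : ℕ) :
    BoundedStep (_root_.childSum^[m] g) := by
  induction m generalizing g with
  | zero => exact h
  | succ m ih => exact ih h.childSum

theorem BoundedStep.exists_abs_iterate_sub_le {g : List ℕ → ℝ} (h : BoundedStep g) (m : ℕ) :
    ∃ C, ∀ w, PosHead w → |_root_.childSum^[m] g w - 2 ^ m * g w| ≤ C := by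
  induction m with
  | zero => exact ⟨0, fun w _ => by simp⟩
  | succ m ih =>
    obtain ⟨C, hC⟩ := ih
    obtain ⟨D, hD⟩ := h.iterate m
    refine ⟨2 * D + 2 * C, fun w hw => ?_⟩
    have h1 := hD w hw
    have h2 := hC w hw
    rw [Function.iterate_succ_apply', _root_.childSum, pow_succ]
    simp only [abs_le] at *
    constructor <;> linarith

/-- Second moment bound for a martingale with bounded increments. -/
theorem exists_iterate_sq_le {M : List ℕ → ℝ} (hM : BoundedStep M)
    (hmart : ∀ w, PosHead w → childSum M w = 2 * M w) :
    ∃ A B : ℝ, 0 ≤ B ∧ ∀ l : ℕ, childSum^[l] (fun w => M w ^ 2) [2] ≤ 2 ^ l * (A + B * l) := by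
  obtain ⟨D, hD⟩ := hM
  refine ⟨M [2] ^ 2, D ^ 2, sq_nonneg _, fun l => ?_⟩
  induction l with
  | zero => simp
  | succ l ih =>
    have key : ∀ w, PosHead w →
        childSum (fun w => M w ^ 2) w ≤ 2 * M w ^ 2 + 2 * D ^ 2 := by
      intro w hw
      have h1 := hmart w hw
      have h2 := sq_le_sq' (abs_le.1 (hD w hw).1).1 (abs_le.1 (hD w hw).1).2
      simp only [childSum] at *
      rw [← eq_sub_iff_add_eq'] at h1
      rw [h1]
      nlinarith
    rw [Function.iterate_succ_apply]
    refine (iterate_childSum_mono key l _ posHead_two).trans ?_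
    rw [iterate_childSum_affine]
    push_cast
    linear_combination 2 * ih

/-- If the average of `f` over the descendants is eventually a martingale, then `|f|` has
sublinear average over level `l`. -/
theorem exists_iterate_abs_le {f : List ℕ → ℝ} (hf : BoundedStep f) (s : ℕ)
    (hmart : ∀ w, PosHead w → childSum^[s + 1] f w = 2 * childSum^[s] f w)
    {ε : ℝ} (hε : 0 < ε) :
    ∃ C : ℝ, ∀ l : ℕ, childSum^[l] (fun w => |f w|) [2] ≤ 2 ^ l * (ε * l + C) := by
  obtain ⟨A, B, hB, hAB⟩ := exists_iterate_sq_le (hf.iterate s) (fun w hw => by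
    rw [← Function.iterate_succ_apply' childSum, hmart w hw])
  obtain ⟨C, hC⟩ := hf.exists_abs_iterate_sub_le s
  set M := childSum^[s] f
  have hB1 : 0 < B + 1 := by linarith
  set δ := ε / (B + 1) with hδ
  have hδ0 : 0 < δ := by positivity
  have hδB : δ * B ≤ ε := by
    rw [hδ, div_mul_eq_mul_div, div_le_iff₀ hB1]
    nlinarith
  refine ⟨δ * A + (1 / δ + C), fun l => ?_⟩
  have key : ∀ w, PosHead w → |f w| ≤ δ * M w ^ 2 + (1 / δ + C) := by
    intro w hw
    have h1 : |f w| ≤ 2 ^ s * |f w| := le_mul_of_one_le_left (abs_nonneg _)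
      (one_le_pow₀ (by norm_num))
    have h2 : 2 ^ s * |f w| ≤ |M w| + C := by
      have : 2 ^ s * |f w| = |2 ^ s * f w| := by
        rw [abs_mul, abs_of_pos (show (0 : ℝ) < 2 ^ s by positivity)]
      rw [this]
      have h3 := hC w hw
      rw [abs_sub_comm] at h3
      linarith [abs_sub_abs_le_abs_sub (2 ^ s * f w) (M w)]
    have h3 : |M w| ≤ δ * M w ^ 2 + 1 / δ := by
      rw [← sq_abs]
      have : 0 ≤ (δ * |M w| - 1) ^ 2 / δ := by positivity
      have e : (δ * |M w| - 1) ^ 2 / δ = δ * |M w| ^ 2 - 2 * |M w| + 1 / δ := by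
        field_simp
        ring
      rw [e] at this
      linarith [abs_nonneg (M w)]
    linarith
  refine (iterate_childSum_mono key l _ posHead_two).trans ?_
  rw [iterate_childSum_affine]
  have h2 : (0 : ℝ) < 2 ^ l := by positivity
  have := mul_le_mul_of_nonneg_left (hAB l) hδ0.le
  have h4 : 2 ^ l * (δ * B * l) ≤ 2 ^ l * (ε * (l : ℝ)) := by gcongr
  linarith

/-! ### Occurrences of a block in a finite list -/

/-- The indicator of having `d` as a prefix. -/
noncomputable def prefixInd (d w : List ℕ) : ℝ := if d <+: w then 1 else 0

theorem prefixInd_nonneg (d w : List ℕ) : 0 ≤ prefixInd d w := by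
  unfold prefixInd; split_ifs <;> norm_num

theorem prefixInd_le_one (d w : List ℕ) : prefixInd d w ≤ 1 := by
  unfold prefixInd; split_ifs <;> norm_num

theorem childSum_prefixInd_one_cons (d w : List ℕ) (hw : PosHead w) :
    childSum (prefixInd (1 :: d)) w = prefixInd d w := by
  obtain ⟨a, t, rfl⟩ := hw
  simp [childSum, prefixInd, incHead, List.cons_prefix_cons]

theorem childSum_prefixInd_add_two_cons (x : ℕ) (d w : List ℕ) (hw : PosHead w) :
    childSum (prefixInd ((x + 2) :: d)) w = prefixInd ((x + 1) :: d) w := by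
  obtain ⟨a, t, rfl⟩ := hw
  simp [childSum, prefixInd, incHead, List.cons_prefix_cons]

theorem iterate_childSum_prefixInd (q s : ℕ) (d : List ℕ) (hd : ∀ x ∈ d, 0 < x)
    (hs : d.sum = s) (w : List ℕ) (hw : PosHead w) :
    childSum^[s + q] (prefixInd d) w = 2 ^ q := by
  induction s generalizing d with
  | zero =>
    have : d = [] := by
      cases d with
      | nil => rfl
      | cons a t =>
        have := hd a (by simp)
        simp at hs
        omega
    subst this
    have : prefixInd [] = fun _ => 1 := by ext; simp [prefixInd]
    rw [this, iterate_childSum_const]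
    simp
  | succ s ih =>
    rw [add_right_comm, Function.iterate_succ_apply]
    match d, hd, hs with
    | [], _, hs => simp at hs
    | 0 :: t, hd, _ => exact absurd (hd 0 (by simp)) (lt_irrefl 0)
    | 1 :: t, hd, hs =>
      rw [iterate_childSum_congr (childSum_prefixInd_one_cons t) _ _ hw]
      refine ih t (fun x hx => hd x (by simp [hx])) ?_
      rw [List.sum_cons] at hs
      omega
    | (x + 2) :: t, hd, hs =>
      rw [iterate_childSum_congr (childSum_prefixInd_add_two_cons x t) _ _ hw]
      refine ih _ (fun y hy => ?_) ?_
      · rcases List.mem_cons.1 hy with rfl | hy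
        · omega
        · exact hd y (by simp [hy])
      · rw [List.sum_cons] at hs ⊢
        omega

/-- The number of occurrences of `d` in `w`, minus `c` times the length of `w`. -/
noncomputable def discrepancy (d : List ℕ) (c : ℝ) : List ℕ → ℝ
  | [] => 0
  | a :: w => prefixInd d (a :: w) - c + discrepancy d c w

theorem childSum_discrepancy (d : List ℕ) (c : ℝ) (w : List ℕ) (hw : PosHead w) :
    childSum (discrepancy d c) w = 2 * discrepancy d c w +
      1 * (childSum (prefixInd d) w + (-1 * prefixInd d w + -c)) := by
  obtain ⟨a, t, rfl⟩ := hw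
  simp only [childSum, incHead, discrepancy]
  ring

theorem iterate_childSum_discrepancy (d : List ℕ) (hd : ∀ x ∈ d, 0 < x) (w : List ℕ)
    (hw : PosHead w) :
    childSum^[d.sum + 1] (discrepancy d ((2 ^ d.sum)⁻¹)) w =
      2 * childSum^[d.sum] (discrepancy d ((2 ^ d.sum)⁻¹)) w := by
  rw [Function.iterate_succ_apply,
    iterate_childSum_congr (childSum_discrepancy d _) _ _ hw, iterate_childSum_linear]
  have h1 := iterate_childSum_linear 1 1 (childSum (prefixInd d))
    (fun w => -1 * prefixInd d w + -(2 ^ d.sum)⁻¹) d.sum w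
  simp only [one_mul] at h1 ⊢
  rw [h1, iterate_childSum_affine, ← Function.iterate_succ_apply,
    iterate_childSum_prefixInd 1 _ d hd rfl w hw]
  have h2 := iterate_childSum_prefixInd 0 _ d hd rfl w hw
  rw [add_zero] at h2
  rw [h2]
  have : (2 : ℝ) ^ d.sum ≠ 0 := by positivity
  field_simp
  norm_num

theorem abs_prefixInd_sub_le {c : ℝ} (h0 : 0 ≤ c) (h1 : c ≤ 1) (d w : List ℕ) :
    |prefixInd d w - c| ≤ 1 := by
  have := prefixInd_nonneg d w
  have := prefixInd_le_one d w
  rw [abs_le]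
  constructor <;> linarith

theorem boundedStep_discrepancy {c : ℝ} (h0 : 0 ≤ c) (h1 : c ≤ 1) (d : List ℕ) :
    BoundedStep (discrepancy d c) := by
  refine ⟨1, ?_⟩
  rintro _ ⟨a, t, rfl⟩
  constructor
  · have := prefixInd_nonneg d ((a + 1 + 1) :: t)
    have := prefixInd_le_one d ((a + 1 + 1) :: t)
    have := prefixInd_nonneg d ((a + 1) :: t)
    have := prefixInd_le_one d ((a + 1) :: t)
    simp only [incHead, discrepancy]
    rw [abs_le]
    constructor <;> linarith
  · rw [discrepancy, add_sub_cancel_right]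
    exact abs_prefixInd_sub_le h0 h1 _ _

theorem abs_discrepancy_le_length {c : ℝ} (h0 : 0 ≤ c) (h1 : c ≤ 1) (d w : List ℕ) :
    |discrepancy d c w| ≤ w.length := by
  induction w with
  | nil => simp [discrepancy]
  | cons a w ih =>
    rw [discrepancy, List.length_cons]
    push_cast
    linarith [abs_add_le (prefixInd d (a :: w) - c) (discrepancy d c w),
      abs_prefixInd_sub_le h0 h1 d (a :: w)]

theorem discrepancy_append (d : List ℕ) (c : ℝ) (u v : List ℕ) :
    discrepancy d c u + discrepancy d c v ≤ discrepancy d c (u ++ v) ∧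
    discrepancy d c (u ++ v) ≤
      discrepancy d c u + discrepancy d c v + (min u.length d.length : ℕ) := by
  induction u with
  | nil => simp [discrepancy]
  | cons a u ih =>
    rw [List.cons_append, discrepancy, discrepancy, ← List.cons_append, List.length_cons]
    by_cases h : d.length ≤ u.length + 1
    · have e : prefixInd d ((a :: u) ++ v) = prefixInd d (a :: u) := by
        have : d <+: (a :: u) ++ v ↔ d <+: a :: u :=
          ⟨fun H => List.prefix_of_prefix_length_le H (List.prefix_append _ _) (by simpa using h),
            fun H => H.trans (List.prefix_append _ _)⟩
        simp only [prefixInd, this]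
      have hm : ((min u.length d.length : ℕ) : ℝ) ≤ (min (u.length + 1) d.length : ℕ) := by
        exact_mod_cast min_le_min_right _ (Nat.le_succ _)
      rw [e]
      constructor <;> linarith [ih.1, ih.2]
    · have e : prefixInd d (a :: u) = 0 :=
        if_neg fun H => h (by simpa using H.length_le)
      rw [e, min_eq_left (by omega), Nat.cast_succ]
      rw [min_eq_left (by omega)] at ih
      constructor <;>
        linarith [ih.1, ih.2, prefixInd_nonneg d (a :: u ++ v), prefixInd_le_one d (a :: u ++ v)]

theorem abs_discrepancy_append_le (d : List ℕ) (c : ℝ) (u v : List ℕ) :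
    |discrepancy d c (u ++ v)| ≤ |discrepancy d c u| + d.length + |discrepancy d c v| := by
  have h := discrepancy_append d c u v
  have hm : ((min u.length d.length : ℕ) : ℝ) ≤ d.length := by exact_mod_cast min_le_right _ _
  have := abs_le.1 (le_refl |discrepancy d c u|)
  have := abs_le.1 (le_refl |discrepancy d c v|)
  rw [abs_le]
  constructor <;> linarith [h.1, h.2]

/-- The discrepancy of a prefix of a concatenation. -/
theorem abs_discrepancy_le_of_prefix_flatten {c : ℝ} (h0 : 0 ≤ c) (h1 : c ≤ 1) (d : List ℕ)
    {R : ℕ} (C : List (List ℕ)) (hR : ∀ u ∈ C, u.length ≤ R) (w : List ℕ)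
    (hw : w <+: C.flatten) :
    |discrepancy d c w| ≤ (C.map fun u => |discrepancy d c u| + d.length).sum + R := by
  induction C generalizing w with
  | nil =>
    have : w = [] := by simpa using hw
    simp [this, discrepancy]
  | cons u C ih =>
    rw [List.flatten_cons] at hw
    rw [List.map_cons, List.sum_cons]
    rcases List.prefix_or_prefix_of_prefix hw (List.prefix_append u _) with hw | ⟨v, rfl⟩
    · have h2 : (w.length : ℝ) ≤ R := by
        exact_mod_cast hw.length_le.trans (hR u (by simp))
      have h3 : 0 ≤ (C.map fun u => |discrepancy d c u| + d.length).sum :=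
        List.sum_nonneg (by simp only [List.mem_map]; rintro _ ⟨u, _, rfl⟩; positivity)
      have h4 := abs_discrepancy_le_length h0 h1 d w
      have h5 := abs_nonneg (discrepancy d c u)
      have h6 : (0 : ℝ) ≤ d.length := by positivity
      linarith
    · have := ih (fun u hu => hR u (by simp [hu])) v ((List.prefix_append_right_inj u).1 hw)
      have := abs_discrepancy_append_le d c u v
      linarith

theorem discrepancy_eq_sum (d : List ℕ) (c : ℝ) (w : List ℕ) :
    discrepancy d c w = ∑ p ∈ Finset.range w.length, prefixInd d (w.drop p) - c * w.length := by
  induction w with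
  | nil => simp [discrepancy]
  | cons a w ih =>
    rw [discrepancy, ih, List.length_cons, Finset.sum_range_succ']
    simp only [List.drop_succ_cons, List.drop_zero]
    push_cast
    ring

theorem prefix_drop_map_range_iff (a : ℕ → ℕ) (d : List ℕ) (hd : d ≠ []) (n p : ℕ) :
    d <+: ((List.range n).map a).drop p ↔
      p + d.length ≤ n ∧ ∀ j < d.length, a (p + j) = d.getD j 0 := by
  have hpos := List.length_pos_of_ne_nil hd
  constructor
  · intro h
    have hl := h.length_le
    simp only [List.length_drop, List.length_map, List.length_range] at hl
    refine ⟨by omega, fun j hj => ?_⟩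
    have := h.getElem hj
    simp only [List.getElem_drop, List.getElem_map, List.getElem_range] at this
    rw [List.getD_eq_getElem _ _ hj, this]
  · rintro ⟨h1, h2⟩
    rw [List.prefix_iff_eq_take]
    refine List.ext_getElem (by simp; omega) fun j hj _ => ?_
    have := h2 j hj
    rw [List.getD_eq_getElem _ _ hj] at this
    simp [this]

theorem occCount_sub_eq_discrepancy (a : ℕ → ℕ) (d : List ℕ) (hd : d ≠ []) (c : ℝ) (n : ℕ) :
    (occCount a d n : ℝ) - c * n = discrepancy d c ((List.range n).map a) := by
  rw [discrepancy_eq_sum, List.length_map, List.length_range]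
  congr 1
  have hpos := List.length_pos_of_ne_nil hd
  simp only [prefixInd, prefix_drop_map_range_iff a d hd, Finset.sum_boole]
  rw [occCount, ← Set.ncard_coe_finset]
  congr 2
  ext p
  simp only [Set.mem_ofPred_eq, Finset.coe_filter, Finset.mem_range]
  constructor
  · exact fun h => ⟨by omega, h⟩
  · exact fun h => h.2

/-! ### The concatenated sequence -/

section Concatenation

variable (π : (l : ℕ) → Equiv.Perm (Fin (2 ^ l)))

/-- The digit lists of level `l`, in permuted order. -/
def permLists (l : ℕ) : List (List ℕ) :=
  List.ofFn fun j : Fin (2 ^ l) => cfe (keplerSeq (2 ^ l + (π l j : ℕ)))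

theorem permLevel_eq_flatten (l : ℕ) : permLevel π l = (permLists π l).flatten := rfl

theorem sum_map_permLists (φ : List ℕ → ℝ) (l : ℕ) :
    ((permLists π l).map φ).sum = childSum^[l] φ [2] := by
  rw [permLists, List.map_ofFn, List.sum_ofFn, ← sum_keplerDigits_eq_iterate,
    Finset.sum_range]
  simp only [Function.comp_apply, cfe_keplerSeq]
  exact Equiv.sum_comp (π l) fun j : Fin (2 ^ l) => φ (keplerDigits (2 ^ l + (j : ℕ)))

theorem length_le_of_mem_permLists {l : ℕ} {u : List ℕ} (hu : u ∈ permLists π l) :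
    u.length ≤ l + 1 := by
  obtain ⟨j, rfl⟩ := List.mem_ofFn.1 hu
  rw [cfe_keplerSeq]
  exact length_keplerDigits_le l _ (by have := (π l j).isLt; rw [pow_succ]; omega)

theorem iterate_childSum_length (l : ℕ) :
    childSum^[l] (fun u => (u.length : ℝ)) [2] = 2 ^ l * (1 + l / 2) := by
  induction l with
  | zero => simp
  | succ l ih =>
    have : childSum (fun u => (u.length : ℝ)) = fun u => 2 * (u.length : ℝ) + 1 := by
      ext u
      rw [childSum, length_incHead, List.length_cons]
      push_cast
      ring
    rw [Function.iterate_succ_apply, this, iterate_childSum_affine, ih]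
    push_cast
    ring

theorem length_permLevel (l : ℕ) : ((permLevel π l).length : ℝ) = 2 ^ l * (1 + l / 2) := by
  rw [← iterate_childSum_length, ← sum_map_permLists π, permLevel_eq_flatten,
    List.length_flatten, Nat.cast_list_sum, List.map_map]
  rfl

/-- The concatenation of the first `L` levels. -/
def permPrefix (L : ℕ) : List ℕ := (List.range L).flatMap (permLevel π)

theorem permPrefix_succ (L : ℕ) : permPrefix π (L + 1) = permPrefix π L ++ permLevel π L := by
  simp [permPrefix, List.range_succ]

theorem permPrefix_mono {L L' : ℕ} (h : L ≤ L') : permPrefix π L <+: permPrefix π L' := by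
  induction L', h using Nat.le_induction with
  | base => exact List.prefix_rfl
  | succ k _ ih =>
    rw [permPrefix_succ]
    exact ih.trans (List.prefix_append _ _)

theorem le_length_permPrefix (L : ℕ) : L ≤ (permPrefix π L).length := by
  induction L with
  | zero => simp
  | succ L ih =>
    have : (0 : ℝ) < (permLevel π L).length := by rw [length_permLevel]; positivity
    have : 0 < (permLevel π L).length := by exact_mod_cast this
    rw [permPrefix_succ, List.length_append]
    omega

theorem le_length_permPrefix_succ (q : ℕ) :
    (2 : ℝ) ^ q * (1 + q / 2) ≤ (permPrefix π (q + 1)).length := by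
  rw [permPrefix_succ, List.length_append, ← length_permLevel π]
  push_cast
  linarith [(Nat.cast_nonneg (permPrefix π q).length : (0 : ℝ) ≤ _)]

theorem permDigits_eq_getElem {L n : ℕ} (h : n < (permPrefix π L).length) :
    permDigits π n = (permPrefix π L)[n] := by
  have h' : n < (permPrefix π (n + 1)).length := le_length_permPrefix π (n + 1)
  rw [permDigits, ← permPrefix, List.getD_eq_getElem _ _ h']
  rcases le_total L (n + 1) with hL | hL
  · exact ((permPrefix_mono π hL).getElem h).symm
  · exact (permPrefix_mono π hL).getElem h'

theorem map_permDigits_isPrefix {L n : ℕ} (h : n ≤ (permPrefix π L).length) :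
    (List.range n).map (permDigits π) <+: permPrefix π L := by
  rw [List.prefix_iff_eq_take]
  refine List.ext_getElem (by simp [h]) fun j hj _ => ?_
  simp only [List.length_map, List.length_range] at hj
  simp [permDigits_eq_getElem π (hj.trans_le h)]

theorem permPrefix_eq_flatten (L : ℕ) :
    permPrefix π L = ((List.range L).flatMap (permLists π)).flatten := by
  induction L with
  | zero => rfl
  | succ L ih => rw [permPrefix_succ, ih, List.range_succ]; simp [permLevel_eq_flatten]

theorem sum_map_flatMap_permLists (φ : List ℕ → ℝ) (L : ℕ) :
    (((List.range L).flatMap (permLists π)).map φ).sum =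
      ∑ l ∈ Finset.range L, childSum^[l] φ [2] := by
  induction L with
  | zero => simp
  | succ L ih =>
    rw [List.range_succ, List.flatMap_append, List.map_append, List.sum_append, ih,
      Finset.sum_range_succ, ← sum_map_permLists π φ L]
    simp

theorem sum_two_pow_mul_le {ε C : ℝ} (hε : 0 ≤ ε) (hC : 0 ≤ C) (L : ℕ) :
    ∑ l ∈ Finset.range L, (2 : ℝ) ^ l * (ε * l + C) ≤ 2 ^ L * (ε * L + C) := by
  induction L with
  | zero => simpa using hC
  | succ L ih =>
    rw [Finset.sum_range_succ, pow_succ]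
    push_cast
    have : (0 : ℝ) ≤ 2 ^ L * ε := by positivity
    linarith

theorem exists_abs_discrepancy_permDigits_le (d : List ℕ) (hd : ∀ x ∈ d, 0 < x) {ε : ℝ}
    (hε : 0 < ε) :
    ∃ C : ℝ, ∀ L n : ℕ, n ≤ (permPrefix π L).length →
      |discrepancy d ((2 ^ d.sum)⁻¹) ((List.range n).map (permDigits π))| ≤
        2 ^ L * (ε * L + C) := by
  have h0 : (0 : ℝ) ≤ (2 ^ d.sum)⁻¹ := by positivity
  have h1 : ((2 : ℝ) ^ d.sum)⁻¹ ≤ 1 := inv_le_one_of_one_le₀ (one_le_pow₀ (by norm_num))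
  obtain ⟨C, hC⟩ := exists_iterate_abs_le (boundedStep_discrepancy h0 h1 d) d.sum
    (iterate_childSum_discrepancy d hd) hε
  refine ⟨|C| + d.length + 1, fun L n hn => ?_⟩
  have hp := map_permDigits_isPrefix π hn
  rw [permPrefix_eq_flatten] at hp
  refine (abs_discrepancy_le_of_prefix_flatten h0 h1 d _ (R := L) ?_ _ hp).trans ?_
  · intro u hu
    obtain ⟨l, hl, hu⟩ := List.mem_flatMap.1 hu
    have := length_le_of_mem_permLists π hu
    have := List.mem_range.1 hl
    omega
  · rw [sum_map_flatMap_permLists]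
    have h2 : (L : ℝ) ≤ 2 ^ L := by exact_mod_cast Nat.lt_two_pow_self.le
    have h3 : ∑ l ∈ Finset.range L, childSum^[l]
        (fun u => |discrepancy d ((2 ^ d.sum)⁻¹) u| + d.length) [2] ≤
        ∑ l ∈ Finset.range L, (2 : ℝ) ^ l * (ε * l + (|C| + d.length)) := by
      refine Finset.sum_le_sum fun l _ => ?_
      have h4 := iterate_childSum_affine 1 d.length
        (fun u => |discrepancy d ((2 ^ d.sum)⁻¹) u|) l [2]
      simp only [one_mul] at h4
      rw [h4]
      have h5 : (2 : ℝ) ^ l * C ≤ 2 ^ l * |C| := by gcongr; exact le_abs_self C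
      linarith [hC l]
    have h6 := sum_two_pow_mul_le hε.le (by positivity : 0 ≤ |C| + d.length) L
    linarith

theorem exists_permPrefix_bracket {q₀ n : ℕ} (h : (permPrefix π (q₀ + 1)).length ≤ n) :
    ∃ q ≥ q₀, (permPrefix π (q + 1)).length ≤ n ∧ n ≤ (permPrefix π (q + 2)).length := by
  classical
  have hex : ∃ L, n < (permPrefix π L).length := ⟨n + 1, le_length_permPrefix π (n + 1)⟩
  have hlt : q₀ + 1 < Nat.find hex := by
    by_contra! hle
    have := (permPrefix_mono π hle).length_le
    have := Nat.find_spec hex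
    omega
  refine ⟨Nat.find hex - 2, by omega, ?_, ?_⟩
  · exact not_lt.1 (Nat.find_min hex (by omega))
  · rw [show Nat.find hex - 2 + 2 = Nat.find hex by omega]
    exact (Nat.find_spec hex).le

end Concatenation

/-- **Level-permuted Kepler concatenations are Minkowski normal**: for any choice of
permutations `π l` of `{1, …, 2^l}`, the sequence `𝒦^π` is Minkowski normal: every block
`d = (d₁, …, d_k)` of positive integers occurs in `𝒦^π` with asymptotic frequency
`2^{-(d₁ + ⋯ + d_k)}`. -/
theorem permDigits_minkowskiNormal (π : (l : ℕ) → Equiv.Perm (Fin (2 ^ l))) :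
    MinkowskiNormalSeq (permDigits π) := by
  intro d hd hpos
  rw [Metric.tendsto_atTop]
  intro ε hε
  obtain ⟨C, hC⟩ := exists_abs_discrepancy_permDigits_le π d hpos
    (show (0 : ℝ) < ε / 32 by positivity)
  obtain ⟨q₀, hq₀⟩ := exists_nat_ge (32 * C / ε)
  refine ⟨(permPrefix π (q₀ + 1)).length, fun n hn => ?_⟩
  obtain ⟨q, hq, hlow, hup⟩ := exists_permPrefix_bracket π hn
  have hlow' : (2 : ℝ) ^ q * (1 + q / 2) ≤ n :=
    (le_length_permPrefix_succ π q).trans (by exact_mod_cast hlow)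
  have hn0 : (0 : ℝ) < n := lt_of_lt_of_le (by positivity) hlow'
  have hbound := hC (q + 2) n hup
  rw [← occCount_sub_eq_discrepancy _ _ hd] at hbound
  have hqC : 32 * C ≤ ε * q := by
    rw [div_le_iff₀ hε] at hq₀
    have : (q₀ : ℝ) ≤ q := by exact_mod_cast hq
    nlinarith
  rw [Real.dist_eq, show (occCount (permDigits π) d n : ℝ) / n - (2 ^ d.sum)⁻¹ =
    (occCount (permDigits π) d n - (2 ^ d.sum)⁻¹ * n) / n by field_simp, abs_div,
    abs_of_pos hn0, div_lt_iff₀ hn0]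
  refine lt_of_le_of_lt hbound (lt_of_lt_of_le ?_ (mul_le_mul_of_nonneg_left hlow' hε.le))
  have h2 : (0 : ℝ) < 2 ^ q := by positivity
  have key : 4 * (ε / 32 * (q + 2) + C) < ε * (1 + (q : ℝ) / 2) := by
    have : 0 ≤ ε * (q : ℝ) := by positivity
    linarith
  have := mul_lt_mul_of_pos_left key h2
  rw [pow_add]
  push_cast
  linarith
end

section
/- Let ℱ = (a_j)_{j≥1} be the infinite sequence of positive integers obtained by concatenating the reduced continued fraction expansions of the rationals of the Farey tree read top-down, left-to-right (i.e., level by level, left to right within each level). Then ℱ is Minkowski normal: for every k ≥ 1 and every block d = (d_1, …, d_k) of positive integers, the asymptotic frequency of occurrences of d among the first n digits of ℱ tends to 2^{−(d_1 + ⋯ + d_k)} as n → ∞. -/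
/-- Farey tree rule (on reduced continued fraction expansions): replace the last digit `aₙ`
by `aₙ + 1`. -/
def fareyBump (a : List ℕ) : List ℕ := a.dropLast ++ [a.getLastD 0 + 1]

/-- Farey tree rule (on reduced continued fraction expansions): replace the last digit `aₙ`
by `aₙ - 1, 2`. -/
def fareySplit (a : List ℕ) : List ℕ := a.dropLast ++ [a.getLastD 0 - 1, 2]

/-- The Farey tree rule: a node `[a₁, …, aₙ]` with `n` odd has left child `[a₁, …, aₙ + 1]`
and right child `[a₁, …, aₙ - 1, 2]`, while for `n` even the left child is
`[a₁, …, aₙ - 1, 2]` and the right child is `[a₁, …, aₙ + 1]`.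
(`false` = left child, `true` = right child.) -/
def fareyChild (a : List ℕ) (b : Bool) : List ℕ :=
  if a.length % 2 = 1 then (if b then fareySplit a else fareyBump a)
  else (if b then fareyBump a else fareySplit a)

/-- The continued fraction expansion at the node of the Farey tree indexed by the binary
word `w` (the root `[2]`, i.e. `1/2`, is indexed by the empty word; appending `false`
(resp. `true`) moves to the left (resp. right) child). -/
def fareyNode (w : List Bool) : List ℕ := w.foldl fareyChild [2]

/-- The top-down, left-to-right enumeration of the Farey tree (by continued fraction
expansions): the root is `fareyIdx 1 = [2]` and the children of `fareyIdx n` are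
`fareyIdx (2n)` (left) and `fareyIdx (2n+1)` (right).  (`fareyIdx 0` is junk.) -/
def fareyIdx (n : ℕ) : List ℕ :=
  if n ≤ 1 then [2]
  else fareyChild (fareyIdx (n / 2)) (decide (n % 2 = 1))
  termination_by n
  decreasing_by exact Nat.div_lt_self (by omega) (by norm_num)

/-- The infinite digit sequence `ℱ` obtained by concatenating the reduced continued
fraction expansions of the rationals of the Farey tree read top-down, left-to-right;
`fareyDigits n` is its `(n+1)`-st digit.  (Each expansion is nonempty, so the concatenation
of the first `n + 1` expansions has more than `n` digits.) -/
def fareyDigits (n : ℕ) : ℕ := ((List.range (n + 1)).flatMap fun i => fareyIdx (i + 1)).getD n 0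

open Finset

/-- Number of positions of the list `l` at which an occurrence of the block `d` ends. -/
def blockCount (d l : List ℕ) : ℕ :=
  ∑ j ∈ range l.length, if d <:+ l.take (j + 1) then 1 else 0

lemma blockCount_nil (d : List ℕ) : blockCount d [] = 0 := rfl

lemma blockCount_concat (d l : List ℕ) (x : ℕ) :
    blockCount d (l ++ [x]) = blockCount d l + if d <:+ l ++ [x] then 1 else 0 := by
  unfold blockCount
  rw [List.length_append, List.length_singleton, sum_range_succ]
  congr 1
  · refine sum_congr rfl fun j hj => ?_
    rw [List.take_append_of_le_length (by simpa using hj)]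
  · rw [List.take_of_length_le (by simp)]

lemma blockCount_le_append (d l₁ l₂ : List ℕ) :
    blockCount d l₁ + blockCount d l₂ ≤ blockCount d (l₁ ++ l₂) := by
  induction l₂ using List.reverseRecOn with
  | nil => simp [blockCount_nil]
  | append_singleton l x ih =>
    rw [← List.append_assoc, blockCount_concat, blockCount_concat, List.append_assoc]
    by_cases h : d <:+ l ++ [x]
    · rw [if_pos h, if_pos (h.trans (List.suffix_append _ _))]
      omega
    · rw [if_neg h]
      omega

lemma blockCount_append_le (d l₁ l₂ : List ℕ) :
    blockCount d (l₁ ++ l₂) ≤ blockCount d l₁ + blockCount d l₂ + min l₂.length d.length := by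
  induction l₂ using List.reverseRecOn with
  | nil => simp [blockCount_nil]
  | append_singleton l x ih =>
    rw [← List.append_assoc, blockCount_concat, blockCount_concat, List.append_assoc,
      List.length_append, List.length_singleton]
    by_cases h : d <:+ l ++ [x]
    · rw [if_pos h, if_pos (h.trans (List.suffix_append _ _))]
      omega
    · by_cases h' : d <:+ l₁ ++ (l ++ [x])
      · have hlen : (l ++ [x]).length < d.length := by
          by_contra! hle
          exact h (List.suffix_of_suffix_length_le h' (List.suffix_append _ _) hle)
        rw [List.length_append, List.length_singleton] at hlen
        rw [if_neg h, if_pos h']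
        omega
      · rw [if_neg h, if_neg h']
        omega

lemma blockCount_le_length (d l : List ℕ) : blockCount d l ≤ l.length := by
  unfold blockCount
  calc _ ≤ ∑ j ∈ range l.length, 1 := sum_le_sum fun j _ => by split_ifs <;> simp
    _ = l.length := by simp

lemma suffix_map_range_iff (a : ℕ → ℕ) (d : List ℕ) (n : ℕ) :
    d <:+ (List.range n).map a ↔
      d.length ≤ n ∧ ∀ j < d.length, a (n - d.length + j) = d.getD j 0 := by
  constructor
  · intro h
    have hle : d.length ≤ n := by simpa using h.length_le
    refine ⟨hle, fun j hj => ?_⟩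
    rw [List.suffix_iff_eq_drop] at h
    rw [List.getD_eq_getElem _ _ hj]
    rw [List.getElem_of_eq h hj]
    simp
  · rintro ⟨hle, h⟩
    rw [List.suffix_iff_eq_drop]
    refine List.ext_getElem (by simp; omega) fun j hj hj' => ?_
    have := h j hj
    rw [List.getD_eq_getElem _ _ hj] at this
    rw [← this]
    simp

lemma occCount_eq_blockCount (a : ℕ → ℕ) {d : List ℕ} (hd : d ≠ []) (n : ℕ) :
    occCount a d n = blockCount d ((List.range n).map a) := by
  have hpos : 0 < d.length := List.length_pos_iff.mpr hd
  induction n with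
  | zero =>
    have : {p : ℕ | p + d.length ≤ 0 ∧ ∀ j < d.length, a (p + j) = d.getD j 0} = ∅ := by
      ext p
      simp only [Set.mem_ofPred_eq, Set.mem_empty_iff_false, iff_false]
      omega
    rw [occCount, this, Set.ncard_empty]
    rfl
  | succ n ih =>
    have hfin : {p : ℕ | p + d.length ≤ n ∧ ∀ j < d.length, a (p + j) = d.getD j 0}.Finite :=
      (Set.finite_le_nat n).subset fun p hp => by
        have := hp.1
        simp only [Set.mem_ofPred_eq]
        omega
    rw [List.range_succ, List.map_append, List.map_singleton, blockCount_concat, ← ih]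
    have hs := suffix_map_range_iff a d (n + 1)
    rw [List.range_succ, List.map_append, List.map_singleton] at hs
    unfold occCount
    split_ifs with h
    · obtain ⟨hle, hm⟩ := hs.mp h
      rw [← Set.ncard_insert_of_notMem (a := n + 1 - d.length) _ hfin]
      · congr 1
        ext p
        simp only [Set.mem_ofPred_eq, Set.mem_insert_iff]
        constructor
        · rintro ⟨h1, h2⟩
          by_cases hp : p = n + 1 - d.length
          · exact Or.inl hp
          · exact Or.inr ⟨by omega, h2⟩
        · rintro (rfl | ⟨h1, h2⟩)
          · exact ⟨by omega, hm⟩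
          · exact ⟨by omega, h2⟩
      · simp only [Set.mem_ofPred_eq, not_and]
        omega
    · rw [add_zero]
      congr 1
      ext p
      simp only [Set.mem_ofPred_eq]
      constructor
      · rintro ⟨h1, h2⟩
        refine ⟨?_, h2⟩
        by_contra hlt
        obtain rfl : p = n + 1 - d.length := by omega
        exact h (hs.mpr ⟨by omega, h2⟩)
      · rintro ⟨h1, h2⟩
        exact ⟨by omega, h2⟩

lemma fareyIdx_one : fareyIdx 1 = [2] := by
  rw [fareyIdx]
  simp

lemma fareyIdx_of_two_le {n : ℕ} (hn : 2 ≤ n) :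
    fareyIdx n = fareyChild (fareyIdx (n / 2)) (decide (n % 2 = 1)) := by
  rw [fareyIdx, if_neg (by omega)]

lemma fareyBump_concat (t : List ℕ) (x : ℕ) : fareyBump (t ++ [x]) = t ++ [x + 1] := by
  simp [fareyBump]

lemma fareySplit_concat (t : List ℕ) (x : ℕ) :
    fareySplit (t ++ [x + 1]) = (t ++ [x]) ++ [2] := by
  simp [fareySplit]

lemma fareyChild_eq_or (a : List ℕ) (b : Bool) :
    fareyChild a b = fareyBump a ∨ fareyChild a b = fareySplit a := by
  unfold fareyChild
  split_ifs <;> simp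

lemma fareyIdx_eq_concat (n : ℕ) : ∃ t x, fareyIdx n = t ++ [x + 2] := by
  induction n using Nat.strong_induction_on with
  | _ n ih =>
    by_cases hn : n ≤ 1
    · exact ⟨[], 0, by rw [fareyIdx, if_pos hn]; rfl⟩
    · obtain ⟨t, x, h⟩ := ih (n / 2) (by omega)
      rw [fareyIdx_of_two_le (by omega)]
      rcases fareyChild_eq_or (fareyIdx (n / 2)) (decide (n % 2 = 1)) with h' | h'
      · exact ⟨t, x + 1, by rw [h', h, fareyBump_concat]⟩
      · exact ⟨t ++ [x + 1], 0, by rw [h', h, fareySplit_concat]⟩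

lemma length_fareyIdx_pos (n : ℕ) : 1 ≤ (fareyIdx n).length := by
  obtain ⟨t, x, h⟩ := fareyIdx_eq_concat n
  simp [h]

lemma length_fareyIdx_le {n : ℕ} (hn : 1 ≤ n) : (fareyIdx n).length ≤ Nat.log 2 n + 1 := by
  induction n using Nat.strong_induction_on with
  | _ n ih =>
    by_cases h1 : n = 1
    · subst h1
      simp [fareyIdx_one]
    · have hlog : Nat.log 2 n = Nat.log 2 (n / 2) + 1 := Nat.log_of_one_lt_of_le (by omega) (by omega)
      have ih' := ih (n / 2) (by omega) (by omega)
      obtain ⟨t, x, h⟩ := fareyIdx_eq_concat (n / 2)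
      rw [fareyIdx_of_two_le (by omega)]
      rw [h] at ih' ⊢
      rcases fareyChild_eq_or (t ++ [x + 2]) (decide (n % 2 = 1)) with h' | h'
      · rw [h', fareyBump_concat]
        simp at ih' ⊢
        omega
      · rw [h', fareySplit_concat]
        simp at ih' ⊢
        omega

/-- Sum of `f` over the first `T` nodes of the Farey tree. -/
def fareySum (f : List ℕ → ℝ) (T : ℕ) : ℝ := ∑ n ∈ range T, f (fareyIdx (n + 1))

lemma fareySum_succ (f : List ℕ → ℝ) (T : ℕ) :
    fareySum f (T + 1) = fareySum f T + f (fareyIdx (T + 1)) :=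
  sum_range_succ _ _

lemma fareySum_two_mul_add_one (f : List ℕ → ℝ) (T : ℕ) :
    fareySum f (2 * T + 1) =
      f [2] + fareySum (fun a => f (fareyBump a) + f (fareySplit a)) T := by
  induction T with
  | zero => simp [fareySum, fareyIdx_one]
  | succ T ih =>
    have h0 : fareyIdx (2 * T + 1 + 1) = fareyChild (fareyIdx (T + 1)) false := by
      rw [fareyIdx_of_two_le (by omega), show (2 * T + 1 + 1) / 2 = T + 1 by omega,
        decide_eq_false (by omega)]
    have h1 : fareyIdx (2 * T + 1 + 1 + 1) = fareyChild (fareyIdx (T + 1)) true := by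
      rw [fareyIdx_of_two_le (by omega), show (2 * T + 1 + 1 + 1) / 2 = T + 1 by omega,
        decide_eq_true (by omega)]
    rw [show 2 * (T + 1) + 1 = 2 * T + 1 + 1 + 1 by ring, fareySum_succ, fareySum_succ, ih,
      fareySum_succ, h0, h1]
    unfold fareyChild
    split_ifs <;> simp at * <;> ring

lemma fareySum_congr {f g : List ℕ → ℝ} (h : ∀ t x, f (t ++ [x + 2]) = g (t ++ [x + 2])) (T : ℕ) :
    fareySum f T = fareySum g T := by
  refine sum_congr rfl fun n _ => ?_
  obtain ⟨t, x, hn⟩ := fareyIdx_eq_concat (n + 1)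
  rw [hn, h]

/-- The run lengths of the path to a node with expansion `a`: the last digit lowered by one. -/
def runLengths (a : List ℕ) : List ℕ := a.dropLast ++ [a.getLastD 0 - 1]

lemma runLengths_concat (t : List ℕ) (x : ℕ) : runLengths (t ++ [x + 1]) = t ++ [x] := by
  simp [runLengths]

/-- Indicator that the block `d` is a suffix of the run lengths of `a`. -/
def endsWith (d a : List ℕ) : ℝ := if d <:+ runLengths a then 1 else 0

lemma concat_suffix_concat {d t : List ℕ} {x y : ℕ} :
    d ++ [x] <:+ t ++ [y] ↔ d <:+ t ∧ x = y := by
  rw [← List.reverse_prefix, List.reverse_append, List.reverse_append]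
  simp [List.cons_prefix_cons, and_comm]

lemma endsWith_mem_Icc (d a : List ℕ) : 0 ≤ endsWith d a ∧ endsWith d a ≤ 1 := by
  unfold endsWith
  split_ifs <;> norm_num

lemma exists_endsWith_bump_add_split {d : List ℕ} (hd : d ≠ []) (hpos : ∀ x ∈ d, 0 < x) :
    ∃ p : List ℕ, p.sum + 1 = d.sum ∧ (∀ x ∈ p, 0 < x) ∧ ∀ t x,
      endsWith d (fareyBump (t ++ [x + 2])) + endsWith d (fareySplit (t ++ [x + 2])) =
        endsWith p (t ++ [x + 2]) := by
  obtain ⟨d', y, rfl⟩ : ∃ d' y, d = d' ++ [y] := ⟨_, _, (List.dropLast_append_getLast hd).symm⟩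
  have hbump (t : List ℕ) (x : ℕ) : runLengths (fareyBump (t ++ [x + 2])) = t ++ [x + 2] := by
    rw [fareyBump_concat, runLengths_concat]
  have hsplit (t : List ℕ) (x : ℕ) :
      runLengths (fareySplit (t ++ [x + 2])) = (t ++ [x + 1]) ++ [1] := by
    rw [fareySplit_concat, runLengths_concat]
  match y with
  | 0 => exact absurd (hpos 0 (by simp)) (lt_irrefl 0)
  | 1 =>
    refine ⟨d', by simp, fun x hx => hpos x (by simp [hx]), fun t x => ?_⟩
    simp only [endsWith, hbump, hsplit, runLengths_concat, concat_suffix_concat]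
    simp
  | z + 2 =>
    refine ⟨d' ++ [z + 1], by simp; omega, fun x hx => ?_, fun t x => ?_⟩
    · rcases List.mem_append.mp hx with h | h
      · exact hpos x (by simp [h])
      · rw [List.mem_singleton.mp h]
        omega
    · simp only [endsWith, hbump, hsplit, runLengths_concat, concat_suffix_concat]
      simp

lemma abs_fareySum_endsWith_sub_le {d : List ℕ} (hpos : ∀ x ∈ d, 0 < x) (T : ℕ) :
    |fareySum (endsWith d) T - T / 2 ^ d.sum| ≤ 2 * d.sum := by
  induction hS : d.sum generalizing d T with
  | zero =>
    have hd : d = [] := by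
      rcases d with _ | ⟨x, t⟩
      · rfl
      · have := hpos x (by simp)
        simp at hS
        omega
    subst hd
    simp [fareySum, endsWith]
  | succ S ih =>
    have hd : d ≠ [] := by
      rintro rfl
      simp at hS
    obtain ⟨p, hp, hppos, hrec⟩ := exists_endsWith_bump_add_split hd hpos
    have hodd (M : ℕ) : fareySum (endsWith d) (2 * M + 1) =
        endsWith d [2] + fareySum (endsWith p) M := by
      rw [fareySum_two_mul_add_one, fareySum_congr hrec]
    have key (M : ℕ) := ih hppos M (by omega)
    have hq : (0 : ℝ) < 1 / 2 ^ S ∧ (1 : ℝ) / 2 ^ S ≤ 1 := by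
      refine ⟨by positivity, ?_⟩
      rw [div_le_one (by positivity)]
      exact one_le_pow₀ (by norm_num)
    have h2 := endsWith_mem_Icc d [2]
    rcases T with _ | N
    · simp [fareySum]
      positivity
    · obtain ⟨M, hM | hM⟩ := Nat.even_or_odd' N
      · subst hM
        rw [hodd]
        have e : ((2 * M + 1 : ℕ) : ℝ) / 2 ^ (S + 1) = M / 2 ^ S + 1 / 2 ^ S / 2 := by
          push_cast
          field_simp
          ring
        have hk := abs_le.mp (key M)
        rw [e, abs_le]
        push_cast
        constructor <;> linarith
      · subst hM
        rw [fareySum_succ, hodd]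
        have h3 := endsWith_mem_Icc d (fareyIdx (2 * M + 1 + 1))
        have e : ((2 * M + 1 + 1 : ℕ) : ℝ) / 2 ^ (S + 1) = M / 2 ^ S + 1 / 2 ^ S := by
          push_cast
          field_simp
          ring
        have hk := abs_le.mp (key M)
        rw [e, abs_le]
        push_cast
        constructor <;> linarith

/-- Excess of the number of occurrences of `d` ending before the last digit of `a` over the
number expected at density `2 ^ (-d.sum)`. -/
noncomputable def excess (d a : List ℕ) : ℝ :=
  blockCount d a.dropLast - (a.length - 1) / 2 ^ d.sum

lemma excess_bump_add_split (d t : List ℕ) (x : ℕ) :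
    excess d (fareyBump (t ++ [x + 2])) + excess d (fareySplit (t ++ [x + 2])) =
      2 * excess d (t ++ [x + 2]) + (endsWith d (t ++ [x + 2]) - 1 / 2 ^ d.sum) := by
  rw [fareyBump_concat, fareySplit_concat]
  simp only [excess, endsWith, List.dropLast_concat, runLengths_concat, blockCount_concat,
    List.length_append, List.length_singleton]
  push_cast
  ring

lemma abs_excess_fareyIdx_le (d : List ℕ) {n : ℕ} (hn : 1 ≤ n) :
    |excess d (fareyIdx n)| ≤ Nat.log 2 n := by
  have hlen := length_fareyIdx_le hn
  obtain ⟨t, x, h⟩ := fareyIdx_eq_concat n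
  rw [h] at hlen ⊢
  simp only [List.length_append, List.length_singleton, add_le_add_iff_right] at hlen
  have hc : (blockCount d t : ℝ) ≤ t.length := mod_cast blockCount_le_length d t
  have hl : (t.length : ℝ) ≤ Nat.log 2 n := mod_cast hlen
  have hq : (t.length : ℝ) / 2 ^ d.sum ≤ t.length :=
    div_le_self (by positivity) (one_le_pow₀ (by norm_num))
  have hq' : 0 ≤ (t.length : ℝ) / 2 ^ d.sum := by positivity
  have hc' : 0 ≤ (blockCount d t : ℝ) := by positivity
  simp only [excess, List.dropLast_concat, List.length_append, List.length_singleton]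
  push_cast
  rw [add_sub_cancel_right, abs_le]
  constructor <;> linarith

lemma fareySum_excess_two_mul_add_one (d : List ℕ) (T : ℕ) :
    fareySum (excess d) (2 * T + 1) =
      2 * fareySum (excess d) T + (fareySum (endsWith d) T - T / 2 ^ d.sum) := by
  have h0 : excess d [2] = 0 := by simp [excess, blockCount_nil]
  rw [fareySum_two_mul_add_one, fareySum_congr
    (g := fun a => 2 * excess d a + (endsWith d a - 1 / 2 ^ d.sum)) (excess_bump_add_split d), h0, zero_add]
  simp only [fareySum, sum_add_distrib, sum_sub_distrib, mul_sum, sum_const, card_range,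
    nsmul_eq_mul]
  ring

lemma abs_fareySum_excess_le {d : List ℕ} (hpos : ∀ x ∈ d, 0 < x) {T : ℕ}
    (hT : 1 ≤ T) :
    |fareySum (excess d) T| ≤ (2 * d.sum + 2) * (2 * T - Nat.log 2 T - 2) := by
  induction T using Nat.strong_induction_on with
  | _ T ih =>
    have hodd {M : ℕ} (hM : 1 ≤ M) (hMT : M < T) : |fareySum (excess d) (2 * M + 1)| ≤
        2 * ((2 * d.sum + 2) * (2 * M - Nat.log 2 M - 2)) + 2 * d.sum := by
      rw [fareySum_excess_two_mul_add_one]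
      refine (abs_add_le _ _).trans (add_le_add ?_ (abs_fareySum_endsWith_sub_le hpos M))
      rw [abs_mul, abs_two]
      exact mul_le_mul_of_nonneg_left (ih M hMT hM) (by norm_num)
    obtain ⟨M, hM | hM⟩ := Nat.even_or_odd' T
    · have hodd' := hodd (M := M) (by omega) (by omega)
      have hlog : Nat.log 2 (2 * M) = Nat.log 2 M + 1 := by
        rw [Nat.log_of_one_lt_of_le (by omega) (by omega)]
        congr 2
        omega
      have hlog' : Nat.log 2 (2 * M + 1) = Nat.log 2 M + 1 := by
        rw [Nat.log_of_one_lt_of_le (by omega) (by omega)]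
        congr 2
        omega
      have hlast := abs_excess_fareyIdx_le d (n := 2 * M + 1) (by omega)
      rw [hlog'] at hlast
      rw [fareySum_succ] at hodd'
      rw [hM, hlog]
      have hl : (0 : ℝ) ≤ Nat.log 2 M := by positivity
      have hs : (0 : ℝ) ≤ d.sum := by positivity
      simp only [Nat.cast_add, Nat.cast_mul, Nat.cast_ofNat, Nat.cast_one] at hlast ⊢
      rw [abs_le] at hlast hodd' ⊢
      constructor <;> nlinarith [mul_nonneg hl hs]
    · rcases Nat.eq_zero_or_pos M with h0 | h0
      · subst h0
        subst hM
        simp [fareySum, fareyIdx_one, excess, blockCount_nil]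
      · have hodd' := hodd (M := M) (by omega) (by omega)
        have hlog' : Nat.log 2 (2 * M + 1) = Nat.log 2 M + 1 := by
          rw [Nat.log_of_one_lt_of_le (by omega) (by omega)]
          congr 2
          omega
        rw [hM, hlog']
        refine hodd'.trans ?_
        have hl : (0 : ℝ) ≤ Nat.log 2 M := by positivity
        have hs : (0 : ℝ) ≤ d.sum := by positivity
        simp only [Nat.cast_add, Nat.cast_mul, Nat.cast_ofNat, Nat.cast_one]
        nlinarith [mul_nonneg hl hs]

/-- Concatenation of the expansions of the first `T` nodes of the Farey tree. -/
def fareyConcat (T : ℕ) : List ℕ := (List.range T).flatMap fun i => fareyIdx (i + 1)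

lemma fareyConcat_succ (T : ℕ) : fareyConcat (T + 1) = fareyConcat T ++ fareyIdx (T + 1) := by
  simp [fareyConcat, List.range_succ]

lemma fareyConcat_prefix {S T : ℕ} (h : S ≤ T) : fareyConcat S <+: fareyConcat T := by
  induction T, h using Nat.le_induction with
  | base => exact List.prefix_rfl
  | succ T _ ih =>
    rw [fareyConcat_succ]
    exact ih.trans (List.prefix_append _ _)

lemma le_length_fareyConcat (T : ℕ) : T ≤ (fareyConcat T).length := by
  induction T with
  | zero => simp
  | succ T ih =>
    have := length_fareyIdx_pos (T + 1)
    rw [fareyConcat_succ, List.length_append]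
    omega

lemma length_fareyConcat (T : ℕ) :
    ((fareyConcat T).length : ℝ) = fareySum (fun a => (a.length : ℝ)) T := by
  induction T with
  | zero => simp [fareyConcat, fareySum]
  | succ T ih =>
    rw [fareyConcat_succ, fareySum_succ, List.length_append]
    push_cast
    rw [ih]

lemma fareyDigits_eq_getElem {T j : ℕ} (h : j < (fareyConcat T).length) :
    fareyDigits j = (fareyConcat T)[j] := by
  have hj : j < (fareyConcat (j + 1)).length := le_length_fareyConcat (j + 1)
  have h1 : fareyDigits j = (fareyConcat (j + 1))[j] := List.getD_eq_getElem _ _ hj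
  rw [h1]
  rcases le_total (j + 1) T with h2 | h2
  · exact (fareyConcat_prefix h2).getElem hj
  · exact ((fareyConcat_prefix h2).getElem h).symm

lemma map_fareyDigits_range (T : ℕ) :
    (List.range (fareyConcat T).length).map fareyDigits = fareyConcat T := by
  refine List.ext_getElem (by simp) fun j hj hj' => ?_
  simp [fareyDigits_eq_getElem hj']

lemma abs_blockCount_fareyConcat_sub_le (d : List ℕ) (T : ℕ) :
    |(blockCount d (fareyConcat T) : ℝ) - (fareyConcat T).length / 2 ^ d.sum
      - fareySum (excess d) T| ≤ (d.length + 2) * T := by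
  induction T with
  | zero => simp [fareyConcat, fareySum, blockCount_nil]
  | succ T ih =>
    rw [fareyConcat_succ, fareySum_succ]
    have h1 := blockCount_le_append d (fareyConcat T) (fareyIdx (T + 1))
    have h2 := blockCount_append_le d (fareyConcat T) (fareyIdx (T + 1))
    have h2' := h2.trans (Nat.add_le_add_left (min_le_right _ _) _)
    obtain ⟨t, x, h⟩ := fareyIdx_eq_concat (T + 1)
    have h3 : blockCount d t ≤ blockCount d (fareyIdx (T + 1)) ∧
        blockCount d (fareyIdx (T + 1)) ≤ blockCount d t + 1 := by
      rw [h, blockCount_concat]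
      split_ifs <;> omega
    have h4 : excess d (fareyIdx (T + 1)) =
        blockCount d t - ((fareyIdx (T + 1)).length - 1) / 2 ^ d.sum := by
      simp only [h, excess, List.dropLast_concat]
    have hq : (0 : ℝ) < 1 / 2 ^ d.sum ∧ (1 : ℝ) / 2 ^ d.sum ≤ 1 := by
      refine ⟨by positivity, ?_⟩
      rw [div_le_one (by positivity)]
      exact one_le_pow₀ (by norm_num)
    have h1r : (blockCount d (fareyConcat T) : ℝ) + blockCount d (fareyIdx (T + 1)) ≤
      blockCount d (fareyConcat T ++ fareyIdx (T + 1)) := mod_cast h1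
    have h2r : (blockCount d (fareyConcat T ++ fareyIdx (T + 1)) : ℝ) ≤
      blockCount d (fareyConcat T) + blockCount d (fareyIdx (T + 1)) + d.length := mod_cast h2'
    have h3r : (blockCount d t : ℝ) ≤ blockCount d (fareyIdx (T + 1)) := mod_cast h3.1
    have h3r' : (blockCount d (fareyIdx (T + 1)) : ℝ) ≤ blockCount d t + 1 := mod_cast h3.2
    rw [h4, List.length_append]
    push_cast
    rw [add_div, sub_div]
    rw [abs_le] at ih ⊢
    constructor <;> linarith

lemma exists_mul_le_length_fareyConcat (K : ℕ) :
    ∃ C : ℝ, 0 ≤ C ∧ ∀ T : ℕ, K * T ≤ 2 * ((fareyConcat T).length : ℝ) + C := by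
  induction K with
  | zero => exact ⟨0, le_rfl, fun T => by simp⟩
  | succ K ih =>
    obtain ⟨C, hC0, hC⟩ := ih
    have hodd (M : ℕ) : ((fareyConcat (2 * M + 1)).length : ℝ) =
        1 + (2 * (fareyConcat M).length + M) := by
      have hrec (t : List ℕ) (x : ℕ) : ((fareyBump (t ++ [x + 2])).length : ℝ) +
          (fareySplit (t ++ [x + 2])).length = 2 * (t ++ [x + 2]).length + 1 := by
        rw [fareyBump_concat, fareySplit_concat]
        simp only [List.length_append, List.length_singleton]
        push_cast
        ring
      rw [length_fareyConcat, length_fareyConcat, fareySum_two_mul_add_one,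
        fareySum_congr (g := fun a => 2 * (a.length : ℝ) + 1) hrec]
      simp [fareySum, sum_add_distrib, mul_sum]
    refine ⟨2 * C + 2 * K + 2, by positivity, fun T => ?_⟩
    rcases T with _ | N
    · simp
      positivity
    · have hN : ((fareyConcat (2 * (N / 2) + 1)).length : ℝ) ≤ (fareyConcat (N + 1)).length :=
        mod_cast (fareyConcat_prefix (by omega)).length_le
      rw [hodd] at hN
      have h := hC (N / 2)
      have hN2 : (N : ℝ) + 1 ≤ 2 * (N / 2 : ℕ) + 2 := by
        exact_mod_cast (by omega : N + 1 ≤ 2 * (N / 2) + 2)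
      have hmul : ((K : ℝ) + 1) * (N + 1) ≤ (K + 1) * (2 * (N / 2 : ℕ) + 2) :=
        mul_le_mul_of_nonneg_left hN2 (by positivity)
      push_cast at h ⊢
      linarith

lemma abs_occCount_sub_le {d : List ℕ} (hd : d ≠ []) (hpos : ∀ x ∈ d, 0 < x) (T n : ℕ)
    (h1 : (fareyConcat T).length ≤ n) (h2 : n < (fareyConcat (T + 1)).length) :
    |(occCount fareyDigits d n : ℝ) - n / 2 ^ d.sum| ≤ (4 * d.sum + d.length + 8) * (T + 1) := by
  obtain ⟨m, rfl⟩ := Nat.exists_eq_add_of_le h1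
  have hm : m ≤ T + 1 := by
    have hlen := length_fareyIdx_le (n := T + 1) (by omega)
    have hlog := Nat.log_lt_self 2 (by omega : T + 1 ≠ 0)
    rw [fareyConcat_succ, List.length_append] at h2
    omega
  have hocc : blockCount d (fareyConcat T) ≤ occCount fareyDigits d ((fareyConcat T).length + m) ∧
      occCount fareyDigits d ((fareyConcat T).length + m) ≤
        blockCount d (fareyConcat T) + 2 * m := by
    rw [occCount_eq_blockCount _ hd, List.range_add, List.map_append, map_fareyDigits_range]
    set l := ((List.range m).map ((fareyConcat T).length + ·)).map fareyDigits with hl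
    have hlm : l.length = m := by simp [hl]
    have e1 := blockCount_le_append d (fareyConcat T) l
    have e2 := blockCount_append_le d (fareyConcat T) l
    have e3 := blockCount_le_length d l
    omega
  have hG : |fareySum (excess d) T| ≤ (4 * d.sum + 4) * T := by
    rcases Nat.eq_zero_or_pos T with rfl | hT
    · simp [fareySum]
    · refine (abs_fareySum_excess_le hpos hT).trans ?_
      have hl : (0 : ℝ) ≤ Nat.log 2 T := by positivity
      have hs : (0 : ℝ) ≤ d.sum := by positivity
      nlinarith [mul_nonneg hl hs]
  have hB := abs_blockCount_fareyConcat_sub_le d T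
  have hmr : (m : ℝ) ≤ T + 1 := mod_cast hm
  have hq : (m : ℝ) / 2 ^ d.sum ≤ m := div_le_self (by positivity) (one_le_pow₀ (by norm_num))
  have hq' : 0 ≤ (m : ℝ) / 2 ^ d.sum := by positivity
  have ho1 : (blockCount d (fareyConcat T) : ℝ) ≤
    occCount fareyDigits d ((fareyConcat T).length + m) := mod_cast hocc.1
  have ho2 : (occCount fareyDigits d ((fareyConcat T).length + m) : ℝ) ≤
    blockCount d (fareyConcat T) + 2 * m := mod_cast hocc.2
  have hs : (0 : ℝ) ≤ d.sum := by positivity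
  have hk : (0 : ℝ) ≤ d.length := by positivity
  rw [Nat.cast_add, add_div]
  rw [abs_le] at hG hB ⊢
  constructor <;> linarith

lemma exists_length_fareyConcat_le_lt (n : ℕ) :
    ∃ T, (fareyConcat T).length ≤ n ∧ n < (fareyConcat (T + 1)).length := by
  have hex : ∃ S, n < (fareyConcat S).length := ⟨n + 1, le_length_fareyConcat (n + 1)⟩
  obtain ⟨T, hT⟩ : ∃ T, Nat.find hex = T + 1 := Nat.exists_eq_succ_of_ne_zero fun h0 => by
    have := Nat.find_spec hex
    rw [h0] at this
    simp [fareyConcat] at this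
  refine ⟨T, not_lt.mp (Nat.find_min hex (by omega)), hT ▸ Nat.find_spec hex⟩

/-- **The Farey concatenation `ℱ` is Minkowski normal**: for every `k ≥ 1` and every block
`d = (d₁, …, d_k)` of positive integers, the asymptotic frequency of occurrences of `d`
among the first `n` digits of `ℱ` tends to `2^{-(d₁ + ⋯ + d_k)}` as `n → ∞`. -/
theorem fareyDigits_minkowskiNormal : MinkowskiNormalSeq fareyDigits := by
  intro d hd hpos
  rw [Metric.tendsto_atTop]
  intro ε hε
  set C : ℝ := 4 * d.sum + d.length + 8 with hC
  have hC0 : 0 < C := by positivity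
  obtain ⟨K, hK⟩ := exists_nat_gt (4 * C / ε)
  obtain ⟨B, hB0, hB⟩ := exists_mul_le_length_fareyConcat K
  rw [div_lt_iff₀ hε] at hK
  obtain ⟨N, hN⟩ := exists_nat_gt ((ε * B + 4 * C) / (2 * ε))
  rw [div_lt_iff₀ (by positivity)] at hN
  refine ⟨N + 1, fun n hn => ?_⟩
  obtain ⟨T, h1, h2⟩ := exists_length_fareyConcat_le_lt n
  have hn0 : (0 : ℝ) < n := by exact_mod_cast (by omega : 0 < n)
  have hNn : (N : ℝ) ≤ n := by exact_mod_cast (by omega : N ≤ n)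
  have h1r : ((fareyConcat T).length : ℝ) ≤ n := mod_cast h1
  have key := abs_occCount_sub_le hd hpos T n h1 h2
  have hdist : (occCount fareyDigits d n : ℝ) / n - ((2 : ℝ) ^ d.sum)⁻¹ =
      (occCount fareyDigits d n - n / 2 ^ d.sum) / n := by
    field_simp
  rw [Real.dist_eq, hdist, abs_div, abs_of_pos hn0, div_lt_iff₀ hn0]
  refine key.trans_lt ?_
  have hT0 : (0 : ℝ) ≤ T := by positivity
  have e1 : 4 * C * T ≤ ε * (2 * n + B) := by
    calc 4 * C * T ≤ K * ε * T := mul_le_mul_of_nonneg_right hK.le hT0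
      _ = ε * (K * T) := by ring
      _ ≤ ε * (2 * n + B) := mul_le_mul_of_nonneg_left (by linarith [hB T]) hε.le
  have e2 : (N : ℝ) * (2 * ε) ≤ n * (2 * ε) := mul_le_mul_of_nonneg_right hNn (by positivity)
  linarith
end
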